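/- arXiv:1101.0935 — 3 statements merged into one kernel-verified Lean document; each statement's English description precedes it below -/
import Mathlib

section
/- Let f : ℝ² → [0,∞) be a bounded probability density with f(x1,x2) → 0 as either coordinate tends to ±∞, and let (X1,X2) be a random vector with density g(x1,x2) = ∫_{x2−1}^{x2} ∫_{x1−1}^{x1} f(u1,u2) du1 du2. Let w1, w2 be continuously differentiable symmetric probability densities on ℝ supported on [−1,1], with derivatives w1′, w2′. Then for every h > 0 and every (x1,x2) ∈ ℝ²: (1/h⁴) ∑_{i=1}^∞ ∑_{j=1}^∞ E[ w1′((x1+i−X1)/h) · w2′((x2+j−X2)/h) ] = (1/h²) ∫∫ w1((x1−v1)/h) w2((x2−v2)/h) f(v1,v2) dv1 dv2, and in particular this expectation of the inversion-based estimator equals ∫∫ w1(z1) w2(z2) f(x1−h z1, x2−h z2) dz1 dz2. -/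
/-! Since `g u = ∫_{(u₁-1,u₁] × (u₂-1,u₂]} f`, Fubini turns the `(i, j)` term into
`∫ f(s) A_i(s₁) B_j(s₂) ds`, where `A_i(s₁) = ∫_{s₁}^{s₁+1} w₁'((x₁+i+1-u)/h) du`
(`integral_prod_mul_window`). By the fundamental theorem of calculus
`A_i = a_{i+1} - a_i` with `a_i(s₁) = h w₁((x₁+i-s₁)/h)`, and `a_i(s₁)` vanishes for large `i`
because `w₁` has bounded support, so `∑_i A_i = -a_0`; likewise `∑_j B_j = -b_0`. The two signs
cancel. Here `i` and `j` start at `0`.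

Sum and integral may be exchanged because the total variation `∑_i |A_i(s₁)|` is bounded
uniformly in `s₁` by `∫ |w₁'((x₁+1-u)/h)| du`, the windows `(s₁-i, s₁-i+1]` being disjoint
(`sum_abs_integral_window_le`). The lemma `tsum_integral_mul_telescope` performs the exchange and
is applied to `j`, then to `i`. The last equality is the substitution `z = (x - v)/h` in the
plane. -/

open MeasureTheory Set Filter

/-- Termwise integration of a telescoping series whose total variation is bounded uniformly. -/
lemma tsum_integral_mul_telescope {α : Type*} [MeasurableSpace α] {μ : Measure α}
    {F : α → ℝ} (hF : Integrable F μ) {b : ℕ → α → ℝ} (hb : ∀ j, Measurable (b j)) {K : ℝ}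
    (hK : ∀ n s, ∑ j ∈ Finset.range n, |b (j + 1) s - b j s| ≤ K)
    (h0 : ∀ s, Tendsto (fun j => b j s) atTop (nhds 0)) :
    ∑' j : ℕ, ∫ s, F s * (b (j + 1) s - b j s) ∂μ = - ∫ s, F s * b 0 s ∂μ := by
  have hle : ∀ j s, |b (j + 1) s - b j s| ≤ K := fun j s =>
    (Finset.single_le_sum (f := fun j => |b (j + 1) s - b j s|) (fun i _ => abs_nonneg _)
      (Finset.self_mem_range_succ j)).trans (hK (j + 1) s)
  have hint : ∀ j, Integrable (fun s => F s * (b (j + 1) s - b j s)) μ := fun j =>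
    hF.mul_bdd (c := K) ((hb (j + 1)).sub (hb j)).aestronglyMeasurable
      (Eventually.of_forall fun s => by simpa using hle j s)
  have hsum : Summable fun j => ∫ s, ‖F s * (b (j + 1) s - b j s)‖ ∂μ := by
    refine summable_of_sum_range_le (c := ∫ s, |F s| * K ∂μ)
      (fun j => integral_nonneg fun s => norm_nonneg _) fun n => ?_
    rw [← integral_finsetSum _ fun j _ => (hint j).norm]
    refine integral_mono (integrable_finsetSum _ fun j _ => (hint j).norm)
      (hF.abs.mul_const K) fun s => ?_
    simp only [norm_mul, Real.norm_eq_abs, ← Finset.mul_sum]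
    exact mul_le_mul_of_nonneg_left (hK n s) (abs_nonneg _)
  rw [integral_tsum_of_summable_integral_norm hint hsum, ← integral_neg]
  refine integral_congr_ae (Eventually.of_forall fun s => ?_)
  have hs : Summable fun j => b (j + 1) s - b j s :=
    Summable.of_abs (summable_of_sum_range_le (fun j => abs_nonneg _) fun n => hK n s)
  have ht : HasSum (fun j => b (j + 1) s - b j s) (0 - b 0 s) := by
    rw [hs.hasSum_iff_tendsto_nat]
    simp only [Finset.sum_range_sub (fun j => b j s)]
    exact (h0 s).sub_const _
  simpa using (ht.mul_left (F s)).tsum_eq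

/-- Fubini: averaging `f` over the window `(u₁-1,u₁] × (u₂-1,u₂]` is adjoint to averaging the
test functions over `(s₁,s₁+1]` and `(s₂,s₂+1]`. -/
lemma integral_prod_mul_window {f : ℝ → ℝ → ℝ}
    (hf : Integrable (fun p : ℝ × ℝ => f p.1 p.2))
    {φ ψ : ℝ → ℝ} (hφ : Integrable φ) (hψ : Integrable ψ) :
    ∫ u : ℝ × ℝ, φ u.1 * ψ u.2 *
        (∫ s2 in (u.2 - 1)..u.2, ∫ s1 in (u.1 - 1)..u.1, f s1 s2)
      = ∫ s : ℝ × ℝ, f s.1 s.2 * (∫ t in s.1..(s.1 + 1), φ t) *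
          (∫ t in s.2..(s.2 + 1), ψ t) := by
  -- The window as a subset of `(u, s)`-space.
  set W : Set ((ℝ × ℝ) × (ℝ × ℝ)) :=
    {q | q.2.1 ∈ Ioc (q.1.1 - 1) q.1.1 ∧ q.2.2 ∈ Ioc (q.1.2 - 1) q.1.2} with hW
  have hWm : MeasurableSet W := by
    have h1 : Measurable fun q : (ℝ × ℝ) × (ℝ × ℝ) => q.1.1 := by fun_prop
    have h2 : Measurable fun q : (ℝ × ℝ) × (ℝ × ℝ) => q.1.2 := by fun_prop
    have h3 : Measurable fun q : (ℝ × ℝ) × (ℝ × ℝ) => q.2.1 := by fun_prop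
    have h4 : Measurable fun q : (ℝ × ℝ) × (ℝ × ℝ) => q.2.2 := by fun_prop
    exact ((measurableSet_lt (h1.sub_const 1) h3).inter (measurableSet_le h3 h1)).inter
      ((measurableSet_lt (h2.sub_const 1) h4).inter (measurableSet_le h4 h2))
  have hint : Integrable
      (W.indicator fun q : (ℝ × ℝ) × (ℝ × ℝ) => φ q.1.1 * ψ q.1.2 * f q.2.1 q.2.2)
      ((volume : Measure (ℝ × ℝ)).prod (volume : Measure (ℝ × ℝ))) :=
    (Integrable.mul_prod (hφ.mul_prod hψ) hf).indicator hWm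
  have hL : ∀ u : ℝ × ℝ, φ u.1 * ψ u.2 *
        (∫ s2 in (u.2 - 1)..u.2, ∫ s1 in (u.1 - 1)..u.1, f s1 s2)
      = ∫ s : ℝ × ℝ, W.indicator (fun q => φ q.1.1 * ψ q.1.2 * f q.2.1 q.2.2) (u, s) := by
    intro u
    have hms : MeasurableSet (Ioc (u.1 - 1) u.1 ×ˢ Ioc (u.2 - 1) u.2) :=
      measurableSet_Ioc.prod measurableSet_Ioc
    have h1 : (∫ s2 in (u.2 - 1)..u.2, ∫ s1 in (u.1 - 1)..u.1, f s1 s2)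
        = ∫ s in Ioc (u.1 - 1) u.1 ×ˢ Ioc (u.2 - 1) u.2, f s.1 s.2 := by
      have h2 := hf.integrableOn (s := Ioc (u.1 - 1) u.1 ×ˢ Ioc (u.2 - 1) u.2)
      rw [IntegrableOn, Measure.volume_eq_prod, ← Measure.prod_restrict] at h2
      rw [Measure.volume_eq_prod, ← Measure.prod_restrict, integral_prod_symm _ h2,
        intervalIntegral.integral_of_le (by linarith)]
      simp only [intervalIntegral.integral_of_le (show u.1 - 1 ≤ u.1 by linarith)]
    rw [h1, ← integral_indicator hms, ← integral_const_mul]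
    congr 1 with s
    by_cases hs : s ∈ Ioc (u.1 - 1) u.1 ×ˢ Ioc (u.2 - 1) u.2
    · rw [indicator_of_mem hs, indicator_of_mem (show (u, s) ∈ W from hs)]
    · rw [indicator_of_notMem hs, indicator_of_notMem (show (u, s) ∉ W from hs), mul_zero]
  have hR : ∀ s : ℝ × ℝ,
      (∫ u : ℝ × ℝ, W.indicator (fun q => φ q.1.1 * ψ q.1.2 * f q.2.1 q.2.2) (u, s))
      = f s.1 s.2 * (∫ t in s.1..(s.1 + 1), φ t) * (∫ t in s.2..(s.2 + 1), ψ t) := by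
    intro s
    -- As a condition on `u` the window is half-open on the other side.
    have hmem : ∀ u : ℝ × ℝ, (u, s) ∈ W ↔
        u.1 ∈ Ico s.1 (s.1 + 1) ∧ u.2 ∈ Ico s.2 (s.2 + 1) := by
      intro u
      simp only [hW, mem_ofPred_eq, mem_Ioc, mem_Ico, sub_lt_iff_lt_add]
      tauto
    rw [intervalIntegral.integral_of_le (by linarith), ← integral_Ico_eq_integral_Ioc,
      intervalIntegral.integral_of_le (by linarith), ← integral_Ico_eq_integral_Ioc,
      ← integral_indicator measurableSet_Ico, ← integral_indicator measurableSet_Ico, mul_assoc,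
      ← integral_prod_mul, ← integral_const_mul, Measure.volume_eq_prod]
    congr 1 with u
    by_cases h1 : u.1 ∈ Ico s.1 (s.1 + 1) <;> by_cases h2 : u.2 ∈ Ico s.2 (s.2 + 1) <;>
      simp [indicator, hmem, h1, h2, mul_comm]
  simp only [hL, ← hR]
  exact integral_integral_swap hint

/-- The shifts of a unit window tile the line, so the window averages of the shifts of an
integrable function have total variation at most its `L¹` norm. -/
lemma sum_abs_integral_window_le {φ : ℝ → ℝ} (hφ : Integrable φ) (s : ℝ) (n : ℕ) :
    ∑ j ∈ Finset.range n, |∫ t in s..(s + 1), φ (t - j)| ≤ ∫ t, |φ t| := by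
  have hi : ∀ a b : ℝ, IntervalIntegrable (fun t => |φ t|) volume a b :=
    fun a b => hφ.abs.intervalIntegrable
  have h1 : ∀ j : ℕ, |∫ t in s..(s + 1), φ (t - j)|
      ≤ -∫ t in (s + 1 - (j : ℝ))..(s + 1 - ((j + 1 : ℕ) : ℝ)), |φ t| := by
    intro j
    rw [← intervalIntegral.integral_symm, intervalIntegral.integral_comp_sub_right]
    have : s + 1 - ((j + 1 : ℕ) : ℝ) = s - j := by push_cast; ring
    rw [this]
    exact intervalIntegral.abs_integral_le_integral_abs (by linarith)
  refine (Finset.sum_le_sum fun j _ => h1 j).trans ?_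
  rw [Finset.sum_neg_distrib, intervalIntegral.sum_integral_adjacent_intervals
    (a := fun j : ℕ => s + 1 - (j : ℝ)) (fun k _ => hi _ _), ← intervalIntegral.integral_symm,
    intervalIntegral.integral_of_le (by simp)]
  exact setIntegral_le_integral hφ.abs (Eventually.of_forall fun t => abs_nonneg _)

lemma integrable_deriv_kernel {w : ℝ → ℝ} (hw : ContDiff ℝ 1 w)
    (hsupp : ∀ u : ℝ, 1 < |u| → w u = 0) {h : ℝ} (hh : 0 < h) (x : ℝ) :
    Integrable fun u => deriv w ((x - u) / h) := by
  have hc : HasCompactSupport w := HasCompactSupport.intro (isCompact_Icc (a := -1) (b := 1))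
    fun u hu => hsupp u (by
      by_contra hlt
      exact hu (abs_le.mp (not_lt.mp hlt)))
  have hi : Integrable (deriv w) :=
    (hw.continuous_deriv le_rfl).integrable_of_hasCompactSupport hc.deriv
  exact (hi.comp_div hh.ne').comp_sub_left x

lemma integral_deriv_kernel {w : ℝ → ℝ} (hw : ContDiff ℝ 1 w)
    {h : ℝ} (hh : 0 < h) (x : ℝ) (s : ℝ) :
    ∫ u in s..(s + 1), deriv w ((x + 1 - u) / h)
      = h * w ((x + 1 - s) / h) - h * w ((x - s) / h) := by
  have hd : ∀ u ∈ uIcc s (s + 1),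
      HasDerivAt (fun u => -(h * w ((x + 1 - u) / h))) (deriv w ((x + 1 - u) / h)) u := by
    intro u _
    have h1 : HasDerivAt (fun u => (x + 1 - u) / h) (-1 / h) u :=
      ((hasDerivAt_id u).const_sub (x + 1)).div_const h
    have h2 := (hw.differentiable one_ne_zero ((x + 1 - u) / h)).hasDerivAt.comp u h1
    exact (h2.const_mul h).neg.congr_deriv (by field_simp)
  rw [intervalIntegral.integral_eq_sub_of_hasDerivAt hd]
  · rw [show x + 1 - (s + 1) = x - s by ring]; ring
  · have := hw.continuous_deriv le_rfl
    exact Continuous.intervalIntegrable (by fun_prop) _ _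

lemma tendsto_kernel_shift {w : ℝ → ℝ}
    (hsupp : ∀ u : ℝ, 1 < |u| → w u = 0) {h : ℝ} (hh : 0 < h) (x : ℝ) (s : ℝ) :
    Tendsto (fun j : ℕ => h * w ((x + j - s) / h)) atTop (nhds 0) := by
  refine tendsto_const_nhds.congr' ?_
  filter_upwards [tendsto_natCast_atTop_atTop.eventually_gt_atTop (h + s - x)] with j hj
  rw [hsupp, mul_zero]
  refine lt_of_lt_of_le ?_ (le_abs_self _)
  rw [lt_div_iff₀ hh]
  linarith

/-- The total variation of the sampled kernel `j ↦ h w((x+j-s)/h)`, bounded uniformly in `s`. -/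
lemma sum_abs_kernel_diff_le {w : ℝ → ℝ} (hw : ContDiff ℝ 1 w)
    (hsupp : ∀ u : ℝ, 1 < |u| → w u = 0) {h : ℝ} (hh : 0 < h) (x : ℝ) (n : ℕ) (s : ℝ) :
    ∑ j ∈ Finset.range n,
        |h * w ((x + ((j + 1 : ℕ) : ℝ) - s) / h) - h * w ((x + (j : ℝ) - s) / h)|
      ≤ ∫ u, |deriv w ((x + 1 - u) / h)| := by
  refine le_trans (le_of_eq (Finset.sum_congr rfl fun j _ => ?_))
    (sum_abs_integral_window_le (integrable_deriv_kernel hw hsupp hh (x + 1)) s n)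
  have h1 := integral_deriv_kernel hw hh (x + j) s
  rw [show x + ((j + 1 : ℕ) : ℝ) - s = x + j + 1 - s by push_cast; ring, ← h1]
  congr 2 with u
  ring_nf

/-- Expectation of the inversion-based estimator `f_{nh}^{++}`: with `(X₁,X₂)` having
density `g = f * Uniform([0,1)²)`, for every bandwidth `h > 0`,
`(1/h⁴) ∑_{i≥1} ∑_{j≥1} E[w₁'((x₁+i−X₁)/h) w₂'((x₂+j−X₂)/h)]
  = (1/h²) ∫∫ w₁((x₁−v₁)/h) w₂((x₂−v₂)/h) f(v₁,v₂) dv₁ dv₂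
  = ∫∫ w₁(z₁) w₂(z₂) f(x₁−hz₁, x₂−hz₂) dz₁ dz₂`. -/
theorem expectation_inversion_estimator_plus_plus
    (f : ℝ → ℝ → ℝ)
    (hfmeas : Measurable (fun p : ℝ × ℝ => f p.1 p.2))
    (hfnonneg : ∀ x1 x2 : ℝ, 0 ≤ f x1 x2)
    (C : ℝ) (hfbd : ∀ x1 x2 : ℝ, f x1 x2 ≤ C)
    (hfint : ∫ p : ℝ × ℝ, f p.1 p.2 = 1)
    (h1top : ∀ x2 : ℝ, Tendsto (fun x1 => f x1 x2) atTop (nhds 0))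
    (h1bot : ∀ x2 : ℝ, Tendsto (fun x1 => f x1 x2) atBot (nhds 0))
    (h2top : ∀ x1 : ℝ, Tendsto (fun x2 => f x1 x2) atTop (nhds 0))
    (h2bot : ∀ x1 : ℝ, Tendsto (fun x2 => f x1 x2) atBot (nhds 0))
    (g : ℝ → ℝ → ℝ)
    (hg : ∀ x1 x2 : ℝ, g x1 x2 = ∫ u2 in (x2 - 1)..x2, ∫ u1 in (x1 - 1)..x1, f u1 u2)
    (w1 w2 : ℝ → ℝ)
    (hw1 : ContDiff ℝ 1 w1) (hw2 : ContDiff ℝ 1 w2)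
    (hw1symm : ∀ u : ℝ, w1 (-u) = w1 u) (hw2symm : ∀ u : ℝ, w2 (-u) = w2 u)
    (hw1nonneg : ∀ u : ℝ, 0 ≤ w1 u) (hw2nonneg : ∀ u : ℝ, 0 ≤ w2 u)
    (hw1int : ∫ u : ℝ, w1 u = 1) (hw2int : ∫ u : ℝ, w2 u = 1)
    (hw1supp : ∀ u : ℝ, 1 < |u| → w1 u = 0) (hw2supp : ∀ u : ℝ, 1 < |u| → w2 u = 0)
    (h : ℝ) (hh : 0 < h) (x1 x2 : ℝ) :
    (1 / h ^ 4) * ∑' i : ℕ, ∑' j : ℕ,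
        ∫ u : ℝ × ℝ,
          deriv w1 ((x1 + ((i : ℝ) + 1) - u.1) / h) *
            deriv w2 ((x2 + ((j : ℝ) + 1) - u.2) / h) * g u.1 u.2
      = (1 / h ^ 2) * ∫ v : ℝ × ℝ,
          w1 ((x1 - v.1) / h) * w2 ((x2 - v.2) / h) * f v.1 v.2
    ∧ (1 / h ^ 2) * (∫ v : ℝ × ℝ,
          w1 ((x1 - v.1) / h) * w2 ((x2 - v.2) / h) * f v.1 v.2)
      = ∫ z : ℝ × ℝ, w1 z.1 * w2 z.2 * f (x1 - h * z.1) (x2 - h * z.2) := by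

  have hf : Integrable (fun p : ℝ × ℝ => f p.1 p.2) := by
    by_contra hn
    rw [integral_undef hn] at hfint
    exact zero_ne_one hfint
  have hc1 := hw1.continuous
  have hc2 := hw2.continuous
  -- The telescoping sequences of antiderivatives.
  set a : ℕ → ℝ × ℝ → ℝ := fun i s => h * w1 ((x1 + i - s.1) / h) with ha
  set b : ℕ → ℝ × ℝ → ℝ := fun j s => h * w2 ((x2 + j - s.2) / h) with hb
  have ham : ∀ i, Measurable (a i) := fun i => by
    have : Continuous (a i) := by simp only [ha]; fun_prop
    exact this.measurable
  have hbm : ∀ j, Measurable (b j) := fun j => by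
    have : Continuous (b j) := by simp only [hb]; fun_prop
    exact this.measurable
  have haK := fun n (s : ℝ × ℝ) => sum_abs_kernel_diff_le hw1 hw1supp hh x1 n s.1
  have hbK := fun n (s : ℝ × ℝ) => sum_abs_kernel_diff_le hw2 hw2supp hh x2 n s.2
  have hterm : ∀ i j : ℕ,
      ∫ u : ℝ × ℝ,
          deriv w1 ((x1 + ((i : ℝ) + 1) - u.1) / h) *
            deriv w2 ((x2 + ((j : ℝ) + 1) - u.2) / h) * g u.1 u.2
        = ∫ s : ℝ × ℝ, (f s.1 s.2 * (a (i + 1) s - a i s)) * (b (j + 1) s - b j s) := by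
    intro i j
    simp only [hg, ← add_assoc]
    rw [integral_prod_mul_window hf
      (φ := fun u => deriv w1 ((x1 + i + 1 - u) / h))
      (ψ := fun u => deriv w2 ((x2 + j + 1 - u) / h))
      (integrable_deriv_kernel hw1 hw1supp hh _) (integrable_deriv_kernel hw2 hw2supp hh _)]
    simp only [integral_deriv_kernel hw1 hh, integral_deriv_kernel hw2 hh, ha, hb,
      Nat.cast_add, Nat.cast_one, ← add_assoc]
  have hFa : ∀ i, Integrable fun s : ℝ × ℝ => f s.1 s.2 * (a (i + 1) s - a i s) := fun i =>
    hf.mul_bdd (c := ∫ u, |deriv w1 ((x1 + 1 - u) / h)|)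
      ((ham (i + 1)).sub (ham i)).aestronglyMeasurable
      (Eventually.of_forall fun s =>
        (Finset.single_le_sum (f := fun i => |a (i + 1) s - a i s|) (fun i _ => abs_nonneg _)
          (Finset.self_mem_range_succ i)).trans (haK (i + 1) s))
  have hj : ∀ i : ℕ,
      ∑' j : ℕ, ∫ s : ℝ × ℝ, (f s.1 s.2 * (a (i + 1) s - a i s)) * (b (j + 1) s - b j s)
        = ∫ s : ℝ × ℝ, (-(f s.1 s.2 * b 0 s)) * (a (i + 1) s - a i s) := by
    intro i
    rw [tsum_integral_mul_telescope (hFa i) hbm hbK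
      fun s => tendsto_kernel_shift hw2supp hh x2 s.2, ← integral_neg]
    congr 1 with s
    ring
  obtain ⟨M, hM⟩ : ∃ M, ∀ u, ‖w2 u‖ ≤ M :=
    (HasCompactSupport.intro (isCompact_Icc (a := -1) (b := 1)) fun u hu => hw2supp u (by
      by_contra hlt
      exact hu (abs_le.mp (not_lt.mp hlt)))).exists_bound_of_continuous hc2
  have hFb : Integrable fun s : ℝ × ℝ => -(f s.1 s.2 * b 0 s) :=
    (hf.mul_bdd (c := h * M) (hbm 0).aestronglyMeasurable (Eventually.of_forall fun s => by
      simp only [hb, norm_mul, Real.norm_of_nonneg hh.le]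
      exact mul_le_mul_of_nonneg_left (hM _) hh.le)).neg
  refine ⟨?_, ?_⟩
  · simp only [hterm, hj]
    rw [tsum_integral_mul_telescope hFb ham haK
      fun s => tendsto_kernel_shift hw1supp hh x1 s.1, ← integral_neg,
      ← integral_const_mul, ← integral_const_mul]
    congr 1 with s
    simp only [ha, hb, Nat.cast_zero, add_zero]
    field_simp
  · -- The substitution `v = x - h z`, whose Jacobian in the plane is `h ^ 2`.
    set G : ℝ × ℝ → ℝ := fun z => w1 z.1 * w2 z.2 * f (x1 - h * z.1) (x2 - h * z.2) with hG
    have h1 : ∀ v : ℝ × ℝ,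
        w1 ((x1 - v.1) / h) * w2 ((x2 - v.2) / h) * f v.1 v.2 = G (h⁻¹ • ((x1, x2) - v)) := by
      intro v
      have e1 : x1 - h * (h⁻¹ * (x1 - v.1)) = v.1 := by field_simp; ring
      have e2 : x2 - h * (h⁻¹ * (x2 - v.2)) = v.2 := by field_simp; ring
      simp only [hG, Prod.smul_fst, Prod.smul_snd, Prod.fst_sub, Prod.snd_sub, smul_eq_mul,
        e1, e2, div_eq_inv_mul]
    simp only [h1]
    rw [integral_sub_left_eq_self (fun v => G (h⁻¹ • v)) volume (x1, x2),
      Measure.integral_comp_inv_smul, Module.finrank_prod, Module.finrank_self, abs_of_pos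
      (by positivity), smul_eq_mul]
    field_simp
end

section
/- Let f : ℝ² → [0,∞) be a bounded probability density, let F be its distribution function, set F^{++}(v1,v2) = P(Y1 > v1, Y2 > v2) for (Y1,Y2) distributed according to f, and let (X1,X2) be a random vector with density g(x1,x2) = ∫_{x2−1}^{x2} ∫_{x1−1}^{x1} f(u1,u2) du1 du2. Let w1, w2 be continuously differentiable symmetric probability densities on ℝ supported on [−1,1], with derivatives w1′, w2′. Then for every 0 < h < 1/2 and every (x1,x2) ∈ ℝ²: E[ ( ∑_{i=1}^∞ ∑_{j=1}^∞ w1′((x1+i−X1)/h) w2′((x2+j−X2)/h) )² ] = h² ∫_{−1}^{1} ∫_{−1}^{1} w1′(z1)² w2′(z2)² F^{++}(x1−h z1, x2−h z2) dz1 dz2. -/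
/-! The expectation on the left is an integral over the observation `u` of the squared kernel sum
times `g u`, and `g u` is itself the integral of `f` over the unit square ending at `u`.

* Since `2 * h < 1`, at most one term of the kernel sum is nonzero, so its square is the sum of the
  squares, and it factors over the two coordinates (`ofReal_tsum_sq`).
* Both sides have the form `∫ p₁ p₂ (∫ k₁ k₂ f)` with nonnegative integrands. By Tonelli
  (`lintegral_product_kernel`) they become `∫ f(y) I₁(y₁) I₂(y₂) dy` with one-dimensional `I₁, I₂`.
* The one-dimensional factors agree up to `h` (`lintegral_shifts`): after the substitution
  `a = x + (i + 1) - h z`, the windows `a - 1 < y ≤ a` for `i = 0, 1, 2, …` tile the half-line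
  `y > x - h z` (`tsum_window`).

The computation takes place in `ℝ≥0∞`, where interchanging sums and integrals needs no
integrability; it is transferred to Bochner integrals at the end. -/

open MeasureTheory Set Filter
open scoped ENNReal

/-- The half-line `t > 0` is tiled by the windows `(i, i + 1]`, `i ∈ ℕ`. -/
lemma tsum_window (t : ℝ) :
    (∑' i : ℕ, if (i : ℝ) < t ∧ t ≤ i + 1 then (1 : ℝ≥0∞) else 0) = if 0 < t then 1 else 0 := by
  by_cases ht : 0 < t
  · rw [if_pos ht, tsum_eq_single (⌈t⌉₊ - 1)]
    · have h1 : 0 < ⌈t⌉₊ := Nat.ceil_pos.2 ht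
      have h2 := Nat.le_ceil t
      have h3 := Nat.ceil_lt_add_one ht.le
      have h4 : ((⌈t⌉₊ - 1 : ℕ) : ℝ) = ⌈t⌉₊ - 1 := by
        rw [Nat.cast_sub h1]; simp
      rw [if_pos]
      rw [h4]
      constructor <;> linarith
    · intro i hi
      rw [if_neg]
      rintro ⟨h1, h2⟩
      apply hi
      have : ⌈t⌉₊ = i + 1 := by
        rw [Nat.ceil_eq_iff (by omega)]
        push_cast
        exact ⟨by simpa using h1, h2⟩
      omega
  · rw [if_neg ht, ENNReal.tsum_eq_zero]
    intro i
    rw [if_neg]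
    rintro ⟨h1, h2⟩
    exact ht (lt_of_le_of_lt (Nat.cast_nonneg i) h1)

lemma measurable_ite_lt_and_le {α : Type*} [MeasurableSpace α] {p q r s : α → ℝ}
    (hp : Measurable p) (hq : Measurable q) (hr : Measurable r) (hs : Measurable s) :
    Measurable fun a => if p a < q a ∧ r a ≤ s a then (1 : ℝ≥0∞) else 0 :=
  Measurable.ite ((measurableSet_lt hp hq).inter (measurableSet_le hr hs) :)
    measurable_const measurable_const

/-- The substitution `a = c - h z`; it also holds when both sides are infinite. -/
lemma lintegral_affine (G : ℝ → ℝ≥0∞) (hG : Measurable G) (c h : ℝ) (hh : 0 < h) :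
    ∫⁻ a, G a = ENNReal.ofReal h * ∫⁻ z, G (c - h * z) := by
  have h1 : ∫⁻ a, G (c - a) = ∫⁻ a, G a := lintegral_sub_left_eq_self G c
  have hm : Measurable fun a => G (c - a) := hG.comp (measurable_const.sub measurable_id)
  have h2 : ∫⁻ z, G (c - h * z) = ENNReal.ofReal |h⁻¹| * ∫⁻ a, G (c - a) := by
    rw [← lintegral_map (f := fun a => G (c - a)) (g := fun z => h * z) hm (by fun_prop),
      Real.map_volume_mul_left hh.ne', lintegral_smul_measure, smul_eq_mul]
  rw [h2, h1, ← mul_assoc, ← ENNReal.ofReal_mul hh.le, abs_of_pos (inv_pos.2 hh),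
    mul_inv_cancel₀ hh.ne', ENNReal.ofReal_one, one_mul]

/-- In one coordinate, integrating the shifted kernels over the observations `a` whose unit window
`(a - 1, a]` contains `y` recovers `h` times the kernel mass over
`y > x - h z`. -/
lemma lintegral_shifts (φ : ℝ → ℝ≥0∞) (hφ : Measurable φ) (x y h : ℝ) (hh : 0 < h) :
    ∫⁻ a, (∑' i : ℕ, φ ((x + ((i : ℝ) + 1) - a) / h)) * (if a - 1 < y ∧ y ≤ a then 1 else 0)
      = ENNReal.ofReal h * ∫⁻ z, φ z * (if x - h * z < y then 1 else 0) := by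
  have hm : ∀ i : ℕ, Measurable fun a : ℝ =>
      φ ((x + ((i : ℝ) + 1) - a) / h) * (if a - 1 < y ∧ y ≤ a then 1 else 0) := fun i =>
    (hφ.comp (by fun_prop)).mul (measurable_ite_lt_and_le
      (by fun_prop) (by fun_prop) (by fun_prop) (by fun_prop))
  simp_rw [← ENNReal.tsum_mul_right]
  rw [lintegral_tsum fun i => (hm i).aemeasurable]
  have key : ∀ i : ℕ, ∫⁻ a, φ ((x + ((i : ℝ) + 1) - a) / h) *
        (if a - 1 < y ∧ y ≤ a then 1 else 0)
      = ENNReal.ofReal h * ∫⁻ z, φ z *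
        (if (i : ℝ) < y - (x - h * z) ∧ y - (x - h * z) ≤ i + 1 then 1 else 0) := by
    intro i
    rw [lintegral_affine _ (hm i) (x + ((i : ℝ) + 1)) h hh]
    congr 1
    refine lintegral_congr fun z => ?_
    have e1 : (x + ((i : ℝ) + 1) - (x + ((i : ℝ) + 1) - h * z)) / h = z := by
      field_simp; ring
    rw [e1]
    congr 1
    refine if_congr ⟨?_, ?_⟩ rfl rfl
    · rintro ⟨p, q⟩; constructor <;> linarith
    · rintro ⟨p, q⟩; constructor <;> linarith
  simp_rw [key]
  rw [ENNReal.tsum_mul_left, ← lintegral_tsum]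
  · congr 1
    refine lintegral_congr fun z => ?_
    rw [ENNReal.tsum_mul_left, tsum_window]
    simp only [sub_pos]
  · intro i
    exact (hφ.mul (measurable_ite_lt_and_le
      (by fun_prop) (by fun_prop) (by fun_prop) (by fun_prop))).aemeasurable

lemma measurable_product_kernel {F : ℝ × ℝ → ℝ≥0∞} (hF : Measurable F)
    {k1 k2 : ℝ → ℝ → ℝ≥0∞}
    (hk1 : Measurable fun p : ℝ × ℝ => k1 p.1 p.2) (hk2 : Measurable fun p : ℝ × ℝ => k2 p.1 p.2) :
    Measurable fun q : (ℝ × ℝ) × (ℝ × ℝ) => k1 q.1.1 q.2.1 * k2 q.1.2 q.2.2 * F q.2 := by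
  have h1 : Measurable fun q : (ℝ × ℝ) × (ℝ × ℝ) => k1 q.1.1 q.2.1 :=
    hk1.comp (f := fun q : (ℝ × ℝ) × (ℝ × ℝ) => (q.1.1, q.2.1)) (by fun_prop)
  have h2 : Measurable fun q : (ℝ × ℝ) × (ℝ × ℝ) => k2 q.1.2 q.2.2 :=
    hk2.comp (f := fun q : (ℝ × ℝ) × (ℝ × ℝ) => (q.1.2, q.2.2)) (by fun_prop)
  exact (h1.mul h2).mul (hF.comp measurable_snd)

/-- Tonelli for product weights and product kernels: the integral over the outer variable
splits into one-dimensional integrals. -/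
lemma lintegral_product_kernel {F : ℝ × ℝ → ℝ≥0∞} (hF : Measurable F)
    {k1 k2 : ℝ → ℝ → ℝ≥0∞}
    (hk1 : Measurable fun p : ℝ × ℝ => k1 p.1 p.2) (hk2 : Measurable fun p : ℝ × ℝ => k2 p.1 p.2)
    {p1 p2 : ℝ → ℝ≥0∞} (hp1 : Measurable p1) (hp2 : Measurable p2) :
    ∫⁻ u : ℝ × ℝ, p1 u.1 * p2 u.2 * ∫⁻ y : ℝ × ℝ, k1 u.1 y.1 * k2 u.2 y.2 * F y
      = ∫⁻ y : ℝ × ℝ, (∫⁻ a, p1 a * k1 a y.1) * (∫⁻ b, p2 b * k2 b y.2) * F y := by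
  have hM := measurable_product_kernel hF hk1 hk2
  have h1 : ∀ u : ℝ × ℝ, p1 u.1 * p2 u.2 * ∫⁻ y : ℝ × ℝ, k1 u.1 y.1 * k2 u.2 y.2 * F y
      = ∫⁻ y : ℝ × ℝ, p1 u.1 * p2 u.2 * (k1 u.1 y.1 * k2 u.2 y.2 * F y) := fun u =>
    (lintegral_const_mul _ (hM.comp (measurable_prodMk_left (x := u)))).symm
  simp_rw [h1]
  rw [lintegral_lintegral_swap]
  · refine lintegral_congr fun y => ?_
    have m1 : Measurable fun a => p1 a * k1 a y.1 :=
      hp1.mul (hk1.comp (f := fun a : ℝ => (a, y.1)) (by fun_prop))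
    have m2 : Measurable fun b => p2 b * k2 b y.2 :=
      hp2.mul (hk2.comp (f := fun b : ℝ => (b, y.2)) (by fun_prop))
    rw [← lintegral_prod_mul m1.aemeasurable m2.aemeasurable, ← lintegral_mul_const]
    · refine lintegral_congr fun u => ?_
      ring
    · exact (m1.comp measurable_fst).mul (m2.comp measurable_snd)
  · exact (((hp1.comp (measurable_fst.comp measurable_fst)).mul
      (hp2.comp (measurable_snd.comp measurable_fst))).mul hM).aemeasurable

lemma deriv_eq_zero_of_support {w : ℝ → ℝ} (hw : ∀ u : ℝ, 1 < |u| → w u = 0) {z : ℝ}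
    (hz : 1 < |z|) : deriv w z = 0 := by
  have : w =ᶠ[nhds z] fun _ => (0 : ℝ) := by
    filter_upwards [(isOpen_lt continuous_const continuous_abs).mem_nhds hz] with u hu
    exact hw u hu
  rw [this.deriv_eq]
  simp

/-- For `h < 1 / 2` the shifted kernels have disjoint supports, so the square of their sum is the
sum of their squares. -/
lemma ofReal_tsum_sq {w : ℝ → ℝ} (hw : ∀ u : ℝ, 1 < |u| → w u = 0) {h : ℝ} (hh0 : 0 < h)
    (hh : h < 1 / 2) (x a : ℝ) :
    ENNReal.ofReal ((∑' i : ℕ, deriv w ((x + ((i : ℝ) + 1) - a) / h)) ^ 2)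
      = ∑' i : ℕ, ENNReal.ofReal (deriv w ((x + ((i : ℝ) + 1) - a) / h) ^ 2) := by
  by_cases hex : ∃ i : ℕ, deriv w ((x + ((i : ℝ) + 1) - a) / h) ≠ 0
  · obtain ⟨i, hi⟩ := hex
    have hclose : ∀ j : ℕ, deriv w ((x + ((j : ℝ) + 1) - a) / h) ≠ 0 →
        |x + ((j : ℝ) + 1) - a| < 1 / 2 := by
      intro j hj
      have hle : |(x + ((j : ℝ) + 1) - a) / h| ≤ 1 := by
        by_contra! hc
        exact hj (deriv_eq_zero_of_support hw hc)
      rw [abs_div, abs_of_pos hh0, div_le_one hh0] at hle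
      linarith
    have huniq : ∀ j : ℕ, j ≠ i → deriv w ((x + ((j : ℝ) + 1) - a) / h) = 0 := by
      intro j hji
      by_contra hj
      have hA := abs_lt.1 (hclose i hi)
      have hB := abs_lt.1 (hclose j hj)
      rcases lt_or_gt_of_ne hji with hlt | hlt
      · have : (j : ℝ) + 1 ≤ i := by exact_mod_cast hlt
        linarith [hA.2, hB.1]
      · have : (i : ℝ) + 1 ≤ j := by exact_mod_cast hlt
        linarith [hA.1, hB.2]
    rw [tsum_eq_single i huniq, tsum_eq_single i]
    intro j hj
    rw [huniq j hj]
    simp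
  · push Not at hex
    simp [hex]

/-- The integral of `f` over a rectangle, written with product indicators in `ℝ≥0∞`. -/
lemma setIntegral_eq_toReal {f : ℝ × ℝ → ℝ} (hf0 : ∀ p, 0 ≤ f p) (hfi : Integrable f)
    {s t : Set ℝ} (hs : MeasurableSet s) (ht : MeasurableSet t) {k1 k2 : ℝ → ℝ≥0∞}
    (hk1 : s.indicator 1 = k1) (hk2 : t.indicator 1 = k2) :
    ∫ u in s ×ˢ t, f u = (∫⁻ y : ℝ × ℝ, k1 y.1 * k2 y.2 * ENNReal.ofReal (f y)).toReal := by
  rw [integral_eq_lintegral_of_nonneg_ae (Eventually.of_forall hf0) hfi.1.restrict,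
    ← lintegral_indicator (hs.prod ht)]
  congr 1
  refine lintegral_congr fun y => ?_
  subst hk1 hk2
  by_cases h1 : y.1 ∈ s <;> by_cases h2 : y.2 ∈ t <;> simp [indicator, h1, h2]

/-- Second moment of one term of the estimator `f_{nh}^{++}`: for `0 < h < 1/2`,
`E[(∑_{i≥1}∑_{j≥1} w₁'((x₁+i−X₁)/h) w₂'((x₂+j−X₂)/h))²]
  = h² ∫_{−1}^{1}∫_{−1}^{1} w₁'(z₁)² w₂'(z₂)² F⁺⁺(x₁−hz₁, x₂−hz₂) dz₁ dz₂`,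
where `(X₁,X₂)` has density `g = f * Uniform([0,1)²)` and `F⁺⁺` is the upper-quadrant
distribution function of `f`. -/
theorem second_moment_inversion_estimator_plus_plus
    (f : ℝ → ℝ → ℝ)
    (hfmeas : Measurable (fun p : ℝ × ℝ => f p.1 p.2))
    (hfnonneg : ∀ x1 x2 : ℝ, 0 ≤ f x1 x2)
    (C : ℝ) (hfbd : ∀ x1 x2 : ℝ, f x1 x2 ≤ C)
    (hfint : ∫ p : ℝ × ℝ, f p.1 p.2 = 1)
    (Fpp : ℝ → ℝ → ℝ)
    (hFpp : ∀ v1 v2 : ℝ, Fpp v1 v2 = ∫ u : ℝ × ℝ in Ioi v1 ×ˢ Ioi v2, f u.1 u.2)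
    (g : ℝ → ℝ → ℝ)
    (hg : ∀ x1 x2 : ℝ, g x1 x2 = ∫ u2 in (x2 - 1)..x2, ∫ u1 in (x1 - 1)..x1, f u1 u2)
    (w1 w2 : ℝ → ℝ)
    (hw1 : ContDiff ℝ 1 w1) (hw2 : ContDiff ℝ 1 w2)
    (hw1symm : ∀ u : ℝ, w1 (-u) = w1 u) (hw2symm : ∀ u : ℝ, w2 (-u) = w2 u)
    (hw1nonneg : ∀ u : ℝ, 0 ≤ w1 u) (hw2nonneg : ∀ u : ℝ, 0 ≤ w2 u)
    (hw1int : ∫ u : ℝ, w1 u = 1) (hw2int : ∫ u : ℝ, w2 u = 1)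
    (hw1supp : ∀ u : ℝ, 1 < |u| → w1 u = 0) (hw2supp : ∀ u : ℝ, 1 < |u| → w2 u = 0)
    (h : ℝ) (hh0 : 0 < h) (hh : h < 1 / 2) (x1 x2 : ℝ) :
    ∫ u : ℝ × ℝ,
        (∑' i : ℕ, ∑' j : ℕ,
          deriv w1 ((x1 + ((i : ℝ) + 1) - u.1) / h) *
            deriv w2 ((x2 + ((j : ℝ) + 1) - u.2) / h)) ^ 2 * g u.1 u.2
      = h ^ 2 * ∫ z : ℝ × ℝ in Icc (-1 : ℝ) 1 ×ˢ Icc (-1 : ℝ) 1,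
          (deriv w1 z.1) ^ 2 * (deriv w2 z.2) ^ 2 *
            Fpp (x1 - h * z.1) (x2 - h * z.2) := by
  have hfi : Integrable (fun p : ℝ × ℝ => f p.1 p.2) := by
    by_contra hc
    rw [integral_undef hc] at hfint
    exact zero_ne_one hfint
  have hf0 : ∀ p : ℝ × ℝ, 0 ≤ f p.1 p.2 := fun p => hfnonneg _ _
  set F : ℝ × ℝ → ℝ≥0∞ := fun p => ENNReal.ofReal (f p.1 p.2) with hFdef
  have hF : Measurable F := hfmeas.ennreal_ofReal
  -- A product of kernels bounded by `1` integrates to a finite value against the density.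
  have hfin : ∀ k1 k2 : ℝ → ℝ≥0∞, (∀ a, k1 a ≤ 1) → (∀ a, k2 a ≤ 1) →
      ∫⁻ y : ℝ × ℝ, k1 y.1 * k2 y.2 * F y < ∞ := by
    intro k1 k2 h1 h2
    refine lt_of_le_of_lt (lintegral_mono fun y => ?_) hfi.lintegral_lt_top
    calc k1 y.1 * k2 y.2 * F y ≤ 1 * 1 * F y := by gcongr <;> simp [h1, h2]
      _ = F y := by simp
  -- `kg` encodes the unit window in `g`, and `kF x z` the half-line defining `Fpp` at `x - h * z`.
  let kg : ℝ → ℝ → ℝ≥0∞ := fun a y => if a - 1 < y ∧ y ≤ a then 1 else 0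
  let kF : ℝ → ℝ → ℝ → ℝ≥0∞ := fun x z y => if x - h * z < y then 1 else 0
  have hkg : Measurable fun p : ℝ × ℝ => kg p.1 p.2 := measurable_ite_lt_and_le
      (by fun_prop) (by fun_prop) (by fun_prop) (by fun_prop)
  have hkF : ∀ x, Measurable fun p : ℝ × ℝ => kF x p.1 p.2 := fun x => Measurable.ite
    (measurableSet_lt (by fun_prop) (by fun_prop)) measurable_const measurable_const
  have hkg1 : ∀ a y, kg a y ≤ 1 := fun a y => by simp only [kg]; split_ifs <;> simp
  have hkF1 : ∀ x a y, kF x a y ≤ 1 := fun x a y => by simp only [kF]; split_ifs <;> simp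
  have hgE : ∀ a b, g a b = (∫⁻ y : ℝ × ℝ, kg a y.1 * kg b y.2 * F y).toReal := by
    intro a b
    rw [← setIntegral_eq_toReal hf0 hfi (measurableSet_Ioc (a := a - 1) (b := a))
      (measurableSet_Ioc (a := b - 1) (b := b)) (by ext y; simp [indicator, kg])
      (by ext y; simp [indicator, kg]), hg, intervalIntegral.integral_of_le (by linarith),
      Measure.volume_eq_prod, ← Measure.prod_restrict, integral_prod_symm]
    · refine integral_congr_ae (Eventually.of_forall fun y => ?_)
      exact intervalIntegral.integral_of_le (by linarith)
    · rw [Measure.prod_restrict]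
      exact hfi.integrableOn
  have hFE : ∀ a b, Fpp (x1 - h * a) (x2 - h * b)
      = (∫⁻ y : ℝ × ℝ, kF x1 a y.1 * kF x2 b y.2 * F y).toReal := by
    intro a b
    rw [← setIntegral_eq_toReal hf0 hfi (measurableSet_Ioi (a := x1 - h * a))
      (measurableSet_Ioi (a := x2 - h * b)) (by ext y; simp [indicator, kF])
      (by ext y; simp [indicator, kF]), hFpp]
  let φ1 : ℝ → ℝ≥0∞ := fun z => ENNReal.ofReal (deriv w1 z ^ 2)
  let φ2 : ℝ → ℝ≥0∞ := fun z => ENNReal.ofReal (deriv w2 z ^ 2)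
  have hφ1 : Measurable φ1 := ((measurable_deriv w1).pow_const 2).ennreal_ofReal
  have hφ2 : Measurable φ2 := ((measurable_deriv w2).pow_const 2).ennreal_ofReal
  let K1 : ℝ → ℝ≥0∞ := fun a => ∑' i : ℕ, φ1 ((x1 + ((i : ℝ) + 1) - a) / h)
  let K2 : ℝ → ℝ≥0∞ := fun a => ∑' i : ℕ, φ2 ((x2 + ((i : ℝ) + 1) - a) / h)
  have hK1 : Measurable K1 := Measurable.tsum fun i => hφ1.comp (by fun_prop)
  have hK2 : Measurable K2 := Measurable.tsum fun i => hφ2.comp (by fun_prop)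
  have hK1e : ∀ a, ENNReal.ofReal ((∑' i : ℕ, deriv w1 ((x1 + ((i : ℝ) + 1) - a) / h)) ^ 2) = K1 a :=
    ofReal_tsum_sq hw1supp hh0 hh x1
  have hK2e : ∀ a, ENNReal.ofReal ((∑' i : ℕ, deriv w2 ((x2 + ((i : ℝ) + 1) - a) / h)) ^ 2) = K2 a :=
    ofReal_tsum_sq hw2supp hh0 hh x2
  have hL : ∫ u : ℝ × ℝ,
        (∑' i : ℕ, ∑' j : ℕ,
          deriv w1 ((x1 + ((i : ℝ) + 1) - u.1) / h) *
            deriv w2 ((x2 + ((j : ℝ) + 1) - u.2) / h)) ^ 2 * g u.1 u.2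
      = (∫⁻ u : ℝ × ℝ, K1 u.1 * K2 u.2 * ∫⁻ y : ℝ × ℝ, kg u.1 y.1 * kg u.2 y.2 * F y).toReal := by
    rw [← integral_toReal]
    · refine integral_congr_ae (Eventually.of_forall fun u => ?_)
      simp only [tsum_mul_left, tsum_mul_right, ENNReal.toReal_mul, ← hK1e, ← hK2e, ← hgE,
        ENNReal.toReal_ofReal (sq_nonneg _), mul_pow]
    · exact (((hK1.comp measurable_fst).mul (hK2.comp measurable_snd)).mul
        (measurable_product_kernel hF hkg hkg).lintegral_prod_right').aemeasurable
    · refine Eventually.of_forall fun u => ?_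
      refine ENNReal.mul_lt_top (ENNReal.mul_lt_top ?_ ?_) (hfin _ _ (hkg1 _) (hkg1 _))
      · rw [← hK1e]; exact ENNReal.ofReal_lt_top
      · rw [← hK2e]; exact ENNReal.ofReal_lt_top
  have hR : ∫ z : ℝ × ℝ in Icc (-1 : ℝ) 1 ×ˢ Icc (-1 : ℝ) 1,
          (deriv w1 z.1) ^ 2 * (deriv w2 z.2) ^ 2 *
            Fpp (x1 - h * z.1) (x2 - h * z.2)
      = (∫⁻ z : ℝ × ℝ, φ1 z.1 * φ2 z.2 *
          ∫⁻ y : ℝ × ℝ, kF x1 z.1 y.1 * kF x2 z.2 y.2 * F y).toReal := by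
    rw [setIntegral_eq_integral_of_forall_compl_eq_zero, ← integral_toReal]
    · refine integral_congr_ae (Eventually.of_forall fun u => ?_)
      simp only [ENNReal.toReal_mul, ← hFE, φ1, φ2, ENNReal.toReal_ofReal (sq_nonneg _)]
    · exact (((hφ1.comp measurable_fst).mul (hφ2.comp measurable_snd)).mul
        (measurable_product_kernel hF (hkF x1) (hkF x2)).lintegral_prod_right').aemeasurable
    · refine Eventually.of_forall fun u => ?_
      exact ENNReal.mul_lt_top (ENNReal.mul_lt_top ENNReal.ofReal_lt_top ENNReal.ofReal_lt_top)
        (hfin _ _ (hkF1 _ _) (hkF1 _ _))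
    · intro z hz
      rw [mem_prod, mem_Icc, mem_Icc, ← abs_le, ← abs_le, not_and_or, not_le, not_le] at hz
      rcases hz with hz | hz
      · simp [deriv_eq_zero_of_support hw1supp hz]
      · simp [deriv_eq_zero_of_support hw2supp hz]
  have hmain : ∫⁻ u : ℝ × ℝ, K1 u.1 * K2 u.2 * ∫⁻ y : ℝ × ℝ, kg u.1 y.1 * kg u.2 y.2 * F y
      = ENNReal.ofReal (h ^ 2) * ∫⁻ z : ℝ × ℝ, φ1 z.1 * φ2 z.2 *
          ∫⁻ y : ℝ × ℝ, kF x1 z.1 y.1 * kF x2 z.2 y.2 * F y := by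
    rw [lintegral_product_kernel hF hkg hkg hK1 hK2,
      lintegral_product_kernel hF (hkF x1) (hkF x2) hφ1 hφ2,
      ← lintegral_const_mul' _ _ ENNReal.ofReal_ne_top]
    refine lintegral_congr fun y => ?_
    have e1 : ∫⁻ a, K1 a * kg a y.1 = ENNReal.ofReal h * ∫⁻ z, φ1 z * kF x1 z y.1 :=
      lintegral_shifts φ1 hφ1 x1 y.1 h hh0
    have e2 : ∫⁻ a, K2 a * kg a y.2 = ENNReal.ofReal h * ∫⁻ z, φ2 z * kF x2 z y.2 :=
      lintegral_shifts φ2 hφ2 x2 y.2 h hh0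
    rw [e1, e2, ENNReal.ofReal_pow hh0.le]
    ring
  rw [hL, hR, hmain, ENNReal.toReal_mul, ENNReal.toReal_ofReal (sq_nonneg h)]
end

section
/- Let f : ℝ² → [0,∞) be a bounded probability density with f(x1,x2) → 0 as either coordinate tends to ±∞, and let (X1,X2) have density g(x1,x2) = ∫_{x2−1}^{x2} ∫_{x1−1}^{x1} f(u1,u2) du1 du2. Let w1, w2 be continuously differentiable symmetric probability densities on ℝ supported on [−1,1], with derivatives w1′, w2′. Then for every h > 0 and every (x1,x2) ∈ ℝ²: ∑_{i=−∞}^{∞} ∑_{j=0}^{∞} E[ w1′((x1−i−X1)/h) · w2′((x2−j−X2)/h) ] = 0; equivalently, the difference S_{1nh}(x1,x2) = f_{nh}^{−−}(x1,x2) − f_{nh}^{+−}(x1,x2) of the two estimators has expectation zero. -/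
open MeasureTheory Set Filter

/-!
Put `ψ v = w₁'((x₁ - v₁)/h) w₂'((x₂ - v₂)/h)`. After the translation `v = u + (i, j)`, the summand of
index `(i, j)` is `∫ ψ(v) g(v₁ - i, v₂ - j) dv`, and `g(v₁ - i, v₂ - j)` is the integral of `f (v - s)`
over `s` in the unit cell `(i, i+1] × (j, j+1]`. By Fubini the summand is thus `∫ H(s) ds` over that
cell, where `H(s) = ∫ ψ(v) f(v - s) dv` is integrable because `ψ` and `f` are. For `i ∈ ℤ` and `j ∈ ℕ`
the cells tile `ℝ × (0, ∞)`, so the double series converges absolutely and its sum is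
`∫_{ℝ × (0, ∞)} H(s) ds = ∫ f(u) ∫_{ℝ × (0, ∞)} ψ(u + s) ds du`. The inner integral factors, and its
first factor `∫ w₁'((x₁ - u₁ - s₁)/h) ds₁` over the whole line vanishes, `w₁` being compactly supported.
-/

/-- The unit cell `(i, i+1] × (j, j+1]`. -/
def unitCell (p : ℤ × ℕ) : Set (ℝ × ℝ) :=
  Ioc (p.1 : ℝ) (p.1 + 1) ×ˢ Ioc (p.2 : ℝ) (p.2 + 1)

lemma measurableSet_unitCell (p : ℤ × ℕ) : MeasurableSet (unitCell p) :=
  measurableSet_Ioc.prod measurableSet_Ioc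

lemma pairwise_disjoint_unitCell : Pairwise (Function.onFun Disjoint unitCell) := by
  rintro ⟨i, j⟩ ⟨k, l⟩ hne
  refine Set.disjoint_prod.2 ?_
  by_cases hik : i = k
  · have hjl : (j : ℤ) ≠ (l : ℤ) := by
      rintro hc
      exact hne (by simp [hik, Int.ofNat_inj.1 hc])
    right
    simpa [Function.onFun] using pairwise_disjoint_Ioc_intCast ℝ hjl
  · left
    exact pairwise_disjoint_Ioc_intCast ℝ hik

lemma iUnion_unitCell : ⋃ p, unitCell p = (univ : Set ℝ) ×ˢ Ioi (0 : ℝ) := by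
  ext ⟨a, b⟩
  simp only [unitCell, mem_iUnion, mem_prod, mem_Ioc, mem_univ, true_and, mem_Ioi]
  constructor
  · rintro ⟨p, -, hb, -⟩
    exact lt_of_le_of_lt (Nat.cast_nonneg _) hb
  · intro hb
    refine ⟨(⌈a⌉ - 1, ⌈b⌉₊ - 1), ⟨?_, ?_⟩, ?_, ?_⟩
    · have := Int.ceil_lt_add_one a
      push_cast; linarith
    · have := Int.le_ceil a
      push_cast; linarith
    all_goals
      have hpos : 1 ≤ ⌈b⌉₊ := Nat.ceil_pos.2 hb
      have h1 := Nat.ceil_lt_add_one hb.le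
      have h2 := Nat.le_ceil b
      push_cast [Nat.cast_sub hpos]
      linarith

lemma hasCompactSupport_of_abs_gt {w : ℝ → ℝ} (hs : ∀ u : ℝ, 1 < |u| → w u = 0) :
    HasCompactSupport w := by
  refine HasCompactSupport.intro (isCompact_Icc (a := (-1 : ℝ)) (b := 1)) fun u hu => hs u ?_
  by_contra! hc
  exact hu (abs_le.1 hc)

lemma integrable_deriv_of_abs_gt {w : ℝ → ℝ} (hw : ContDiff ℝ 1 w)
    (hs : ∀ u : ℝ, 1 < |u| → w u = 0) : Integrable (deriv w) :=
  (hw.continuous_deriv le_rfl).integrable_of_hasCompactSupport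
    (hasCompactSupport_of_abs_gt hs).deriv

lemma integral_deriv_of_abs_gt {w : ℝ → ℝ} (hw : ContDiff ℝ 1 w)
    (hs : ∀ u : ℝ, 1 < |u| → w u = 0) : ∫ u, deriv w u = 0 :=
  integral_eq_zero_of_hasDerivAt_of_integrable
    (fun x => (hw.differentiable one_ne_zero x).hasDerivAt) (integrable_deriv_of_abs_gt hw hs)
    (hw.continuous.integrable_of_hasCompactSupport (hasCompactSupport_of_abs_gt hs))

lemma integrable_kernel {w : ℝ → ℝ} (hw : ContDiff ℝ 1 w)
    (hs : ∀ u : ℝ, 1 < |u| → w u = 0) {h : ℝ} (hh : 0 < h) (x : ℝ) :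
    Integrable (fun t => deriv w ((x - t) / h)) :=
  ((integrable_deriv_of_abs_gt hw hs).comp_div hh.ne').comp_sub_left x

/-- The shifted moving average of `F` over a unit square is an integral of `F (v - ·)` over a unit
cell. -/
lemma shifted_average_eq {F : ℝ × ℝ → ℝ} (hF : Integrable F) (v : ℝ × ℝ) (p : ℤ × ℕ) :
    ∫ u2 in (v.2 - p.2 - 1)..(v.2 - p.2), ∫ u1 in (v.1 - p.1 - 1)..(v.1 - p.1), F (u1, u2)
      = ∫ s in unitCell p, F (v - s) := by
  have hI : Integrable (fun s : ℝ × ℝ => F (v - s)) := hF.comp_sub_left v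
  have h2 : ∫ s in unitCell p, F (v - s)
      = ∫ s2 in Ioc (p.2 : ℝ) (p.2 + 1), ∫ s1 in Ioc (p.1 : ℝ) (p.1 + 1),
          F (v.1 - s1, v.2 - s2) := by
    unfold unitCell
    rw [Measure.volume_eq_prod, ← setIntegral_prod_swap, setIntegral_prod]
    · rfl
    · exact (hI.integrableOn (s := Ioc (p.1 : ℝ) (p.1 + 1) ×ˢ Ioc (p.2 : ℝ) (p.2 + 1))).swap
  rw [h2, ← intervalIntegral.integral_of_le (by linarith)]
  have e1 : ∀ s2 : ℝ, ∫ s1 in Ioc (p.1 : ℝ) (p.1 + 1), F (v.1 - s1, v.2 - s2)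
      = ∫ u1 in (v.1 - p.1 - 1)..(v.1 - p.1), F (u1, v.2 - s2) := by
    intro s2
    rw [← intervalIntegral.integral_of_le (by linarith),
      intervalIntegral.integral_comp_sub_left (fun t => F (t, v.2 - s2)), sub_sub]
  simp_rw [e1]
  rw [intervalIntegral.integral_comp_sub_left
    (fun t => ∫ u1 in (v.1 - p.1 - 1)..(v.1 - p.1), F (u1, t)), sub_sub v.2]

lemma integrable_correlation_integrand {ψ F : ℝ × ℝ → ℝ} (hψ : Integrable ψ) (hF : Integrable F) :
    Integrable (fun q : (ℝ × ℝ) × (ℝ × ℝ) => ψ q.2 * F (q.2 - q.1))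
      ((volume : Measure (ℝ × ℝ)).prod volume) := by
  simpa using hψ.convolution_integrand (ContinuousLinearMap.mul ℝ ℝ) (hF.comp_neg)

/-- If the integral over `S` of every translate of `ψ` vanishes, so does the integral over `S` of
the cross-correlation of `ψ` with any integrable `F`. -/
lemma setIntegral_correlation_eq_zero {ψ F : ℝ × ℝ → ℝ} (hψ : Integrable ψ) (hF : Integrable F)
    (S : Set (ℝ × ℝ)) (h0 : ∀ u : ℝ × ℝ, ∫ s in S, ψ (s - u) = 0) :
    ∫ s in S, ∫ v, ψ v * F (v - s) = 0 := by
  have e : ∀ s : ℝ × ℝ, ∫ v, ψ v * F (v - s) = ∫ u, F (-u) * ψ (s - u) := by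
    intro s
    rw [← integral_sub_left_eq_self (fun v => ψ v * F (v - s)) volume s]
    refine integral_congr_ae (Eventually.of_forall fun u => ?_)
    simp [mul_comm]
  simp_rw [e]
  have hI : Integrable (fun q : (ℝ × ℝ) × (ℝ × ℝ) => F (-q.2) * ψ (q.1 - q.2))
      ((volume : Measure (ℝ × ℝ)).prod volume) := by
    simpa using hF.comp_neg.convolution_integrand (ContinuousLinearMap.mul ℝ ℝ) hψ
  have hI' : Integrable (fun q : (ℝ × ℝ) × (ℝ × ℝ) => F (-q.2) * ψ (q.1 - q.2))
      ((volume.restrict S).prod volume) :=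
    hI.mono_measure (Measure.prod_mono Measure.restrict_le_self le_rfl)
  rw [integral_integral_swap hI']
  simp [integral_const_mul, h0]

/-- The difference `S_{1nh} = f_{nh}^{−−} − f_{nh}^{+−}` has expectation zero: with
`(X₁,X₂)` having density `g = f * Uniform([0,1)²)`,
`∑_{i=−∞}^{∞} ∑_{j=0}^{∞} E[w₁'((x₁−i−X₁)/h) w₂'((x₂−j−X₂)/h)] = 0`. -/
theorem expectation_difference_estimators_zero
    (f : ℝ → ℝ → ℝ)
    (hfmeas : Measurable (fun p : ℝ × ℝ => f p.1 p.2))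
    (hfnonneg : ∀ x1 x2 : ℝ, 0 ≤ f x1 x2)
    (C : ℝ) (hfbd : ∀ x1 x2 : ℝ, f x1 x2 ≤ C)
    (hfint : ∫ p : ℝ × ℝ, f p.1 p.2 = 1)
    (h1top : ∀ x2 : ℝ, Tendsto (fun x1 => f x1 x2) atTop (nhds 0))
    (h1bot : ∀ x2 : ℝ, Tendsto (fun x1 => f x1 x2) atBot (nhds 0))
    (h2top : ∀ x1 : ℝ, Tendsto (fun x2 => f x1 x2) atTop (nhds 0))
    (h2bot : ∀ x1 : ℝ, Tendsto (fun x2 => f x1 x2) atBot (nhds 0))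
    (g : ℝ → ℝ → ℝ)
    (hg : ∀ x1 x2 : ℝ, g x1 x2 = ∫ u2 in (x2 - 1)..x2, ∫ u1 in (x1 - 1)..x1, f u1 u2)
    (w1 w2 : ℝ → ℝ)
    (hw1 : ContDiff ℝ 1 w1) (hw2 : ContDiff ℝ 1 w2)
    (hw1symm : ∀ u : ℝ, w1 (-u) = w1 u) (hw2symm : ∀ u : ℝ, w2 (-u) = w2 u)
    (hw1nonneg : ∀ u : ℝ, 0 ≤ w1 u) (hw2nonneg : ∀ u : ℝ, 0 ≤ w2 u)
    (hw1int : ∫ u : ℝ, w1 u = 1) (hw2int : ∫ u : ℝ, w2 u = 1)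
    (hw1supp : ∀ u : ℝ, 1 < |u| → w1 u = 0) (hw2supp : ∀ u : ℝ, 1 < |u| → w2 u = 0)
    (h : ℝ) (hh : 0 < h) (x1 x2 : ℝ) :
    ∑' i : ℤ, ∑' j : ℕ,
        ∫ u : ℝ × ℝ,
          deriv w1 ((x1 - (i : ℝ) - u.1) / h) *
            deriv w2 ((x2 - (j : ℝ) - u.2) / h) * g u.1 u.2 = 0 := by
  set ψ : ℝ × ℝ → ℝ :=
    fun v => deriv w1 ((x1 - v.1) / h) * deriv w2 ((x2 - v.2) / h) with hψdef
  set F : ℝ × ℝ → ℝ := fun p => f p.1 p.2 with hFdef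
  -- A non-integrable `F` would have Bochner integral `0`.
  have hF : Integrable F := by
    by_contra hc
    rw [integral_undef hc] at hfint
    exact zero_ne_one hfint
  have hψ : Integrable ψ :=
    (integrable_kernel hw1 hw1supp hh x1).mul_prod (integrable_kernel hw2 hw2supp hh x2)
  have hK := integrable_correlation_integrand hψ hF
  have hterm : ∀ p : ℤ × ℕ,
      ∫ u : ℝ × ℝ, deriv w1 ((x1 - (p.1 : ℝ) - u.1) / h) *
            deriv w2 ((x2 - (p.2 : ℝ) - u.2) / h) * g u.1 u.2
        = ∫ s in unitCell p, ∫ v, ψ v * F (v - s) := by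
    intro p
    have hK' : Integrable (fun q : (ℝ × ℝ) × (ℝ × ℝ) => ψ q.2 * F (q.2 - q.1))
        ((volume.restrict (unitCell p)).prod volume) :=
      hK.mono_measure (Measure.prod_mono Measure.restrict_le_self le_rfl)
    rw [integral_integral_swap hK',
      ← integral_sub_right_eq_self _ (((p.1 : ℝ), (p.2 : ℝ)) : ℝ × ℝ)]
    refine integral_congr_ae (Eventually.of_forall fun v => ?_)
    simp only [Prod.fst_sub, Prod.snd_sub]
    rw [integral_const_mul, ← shifted_average_eq hF v p, hg, hψdef]
    simp only [hFdef]
    congr 4 <;> ring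
  have hsum : HasSum (fun p : ℤ × ℕ =>
      ∫ u : ℝ × ℝ, deriv w1 ((x1 - (p.1 : ℝ) - u.1) / h) *
            deriv w2 ((x2 - (p.2 : ℝ) - u.2) / h) * g u.1 u.2) 0 := by
    simp_rw [hterm]
    have hs := hasSum_integral_iUnion measurableSet_unitCell pairwise_disjoint_unitCell
      hK.integral_prod_left.integrableOn
    rw [iUnion_unitCell] at hs
    refine (setIntegral_correlation_eq_zero hψ hF _ fun u => ?_) ▸ hs
    have hz : ∫ a : ℝ, deriv w1 ((x1 - (a - u.1)) / h) = 0 := by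
      rw [integral_sub_right_eq_self (fun a => deriv w1 ((x1 - a) / h)),
        integral_sub_left_eq_self (fun a => deriv w1 (a / h)) volume x1,
        Measure.integral_comp_div, integral_deriv_of_abs_gt hw1 hw1supp, smul_zero]
    have hprod := setIntegral_prod_mul (μ := (volume : Measure ℝ)) (ν := (volume : Measure ℝ))
      (fun a => deriv w1 ((x1 - (a - u.1)) / h)) (fun b => deriv w2 ((x2 - (b - u.2)) / h))
      univ (Ioi 0)
    rw [setIntegral_univ, hz, zero_mul] at hprod
    exact hprod
  rw [← hsum.summable.tsum_prod, hsum.tsum_eq]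
end
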